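/- (Giambruno's theorem) For any n complex alternating n×n matrices A_1, …, A_n (A_iᵀ = −A_i) and any n complex symmetric n×n matrices B_1, …, B_n (B_jᵀ = B_j), the double alternating sum Σ_{σ ∈ S_n} Σ_{τ ∈ S_n} sgn(σ) sgn(τ) · A_{σ(1)} B_{τ(1)} A_{σ(2)} B_{τ(2)} ⋯ A_{σ(n)} B_{τ(n)} equals the zero matrix, where the product is the ordered matrix product. -/

import Mathlib

open Matrix

/-!
Let `e_i`, `f_j` (`1 ≤ i, j ≤ n`) be the generators of an exterior algebra, and consider the
matrices `X = ∑ e_i A_i` and `Y = ∑ f_j B_j` over it. The entries of `X` and `Y` anticommute, so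
`(XY)ᵀ = YX` and `tr (XY)^(k+1) = -tr (YX)^(k+1) = -tr (XY)^(k+1)`, hence all these traces vanish.
The entries of `M = XY` lie in the centre, a torsion-free commutative ring. There, with
`N = 1 - tM`, the derivative `-tr (adj(N) M)` of `det N` is divisible by every power of `t`, since
`tr (adj(N) M^k) = t tr (adj(N) M^(k+1))`. So `det N = 1` and `M^n = 0`. The double alternating sum
is the coefficient of `e_1 f_1 e_2 f_2 ⋯ e_n f_n` in `M^n`.
-/

section TracelessPowers

open Polynomial

variable {m R : Type*} [Fintype m] [DecidableEq m] [CommRing R]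

theorem derivative_det (N : Matrix m m R[X]) :
    derivative N.det = (N.adjugate * N.map derivative).trace := by
  have adjugate_mul_diag (i : m) : (N.adjugate * N.map derivative) i i =
      (N.updateCol i fun j => derivative (N j i)).det := by
    rw [← cramer_apply, cramer_eq_adjugate_mulVec]
    rfl
  simp only [trace, diag_apply, adjugate_mul_diag, det_apply, map_sum]
  rw [Finset.sum_comm]
  refine Finset.sum_congr rfl fun σ _ => ?_
  rw [Units.smul_def, map_zsmul, derivative_prod_finset, Finset.smul_sum]
  refine Finset.sum_congr rfl fun i _ => ?_
  rw [← Finset.mul_prod_erase Finset.univ _ (Finset.mem_univ i), updateCol_self, mul_comm,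
    Units.smul_def]
  congr 2
  refine Finset.prod_congr rfl fun j hj => ?_
  rw [updateCol_ne (Finset.ne_of_mem_erase hj)]

theorem derivative_charpolyRev (M : Matrix m m R) :
    derivative M.charpolyRev =
      -((1 - (X : R[X]) • M.map C).adjugate * M.map C).trace := by
  have map_derivative : (1 - (X : R[X]) • M.map C).map derivative = -M.map C := by
    ext1 i j
    by_cases h : i = j <;> simp [h]
  rw [charpolyRev, derivative_det, map_derivative, mul_neg, trace_neg]

theorem trace_adjugate_mul_pow_eq_X_mul {M : Matrix m m R} {k : ℕ} (hM : (M ^ k).trace = 0) :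
    ((1 - (X : R[X]) • M.map C).adjugate * M.map C ^ k).trace =
      X * ((1 - (X : R[X]) • M.map C).adjugate * M.map C ^ (k + 1)).trace := by
  set N := 1 - (X : R[X]) • M.map C
  have one_eq : (1 : Matrix m m R[X]) = N + (X : R[X]) • M.map C := (sub_add_cancel _ _).symm
  have trace_map : (M.map C ^ k).trace = 0 := by
    rw [← RingHom.mapMatrix_apply, ← map_pow, RingHom.mapMatrix_apply, ← AddMonoidHom.map_trace,
      hM, map_zero]
  calc (N.adjugate * M.map C ^ k).trace
    _ = (N.adjugate * (N + (X : R[X]) • M.map C) * M.map C ^ k).trace := by rw [← one_eq, mul_one]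
    _ = N.det * (M.map C ^ k).trace + X * (N.adjugate * M.map C ^ (k + 1)).trace := by
      rw [mul_add, adjugate_mul, mul_smul_comm, add_mul, smul_mul_assoc, smul_mul_assoc, one_mul,
        trace_add, trace_smul, trace_smul, smul_eq_mul, smul_eq_mul, mul_assoc, ← pow_succ']
    _ = X * (N.adjugate * M.map C ^ (k + 1)).trace := by rw [trace_map, mul_zero, zero_add]

theorem derivative_charpolyRev_eq_zero {M : Matrix m m R} (hM : ∀ k, (M ^ (k + 1)).trace = 0) :
    derivative M.charpolyRev = 0 := by
  set N := 1 - (X : R[X]) • M.map C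
  have trace_eq (k : ℕ) : (N.adjugate * M.map C).trace =
      X ^ k * (N.adjugate * M.map C ^ (k + 1)).trace := by
    induction k with
    | zero => rw [pow_zero, one_mul, zero_add, pow_one]
    | succ k ih => rw [ih, trace_adjugate_mul_pow_eq_X_mul (hM k), ← mul_assoc, ← pow_succ]
  rw [derivative_charpolyRev, neg_eq_zero]
  ext d
  exact X_pow_dvd_iff.mp ⟨_, trace_eq (d + 1)⟩ d d.lt_succ_self

theorem charpoly_eq_X_pow_of_trace_pow_eq_zero [IsAddTorsionFree R] {M : Matrix m m R}
    (hM : ∀ k, (M ^ (k + 1)).trace = 0) : M.charpoly = X ^ Fintype.card m := by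
  nontriviality R
  have charpolyRev_eq_one : M.charpolyRev = 1 := by
    rw [eq_C_of_natDegree_eq_zero (derivative_eq_zero.mp (derivative_charpolyRev_eq_zero hM)),
      coeff_zero_eq_eval_zero, eval_charpolyRev, C_1]
  rw [← reflect_reflect (N := M.charpoly.natDegree) (p := M.charpoly), ← reverse,
    reverse_charpoly, charpolyRev_eq_one, reflect_one, charpoly_natDegree_eq_dim]

theorem pow_card_eq_zero_of_trace_pow_eq_zero [IsAddTorsionFree R] {M : Matrix m m R}
    (hM : ∀ k, (M ^ (k + 1)).trace = 0) : M ^ Fintype.card m = 0 := by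
  simpa [charpoly_eq_X_pow_of_trace_pow_eq_zero hM] using M.aeval_self_charpoly

end TracelessPowers

section Anticommuting

variable {m n E : Type*} [Fintype m] [Ring E]

theorem transpose_mul_of_anticommute {l : Type*} {P : Matrix l m E} {Q : Matrix m n E}
    (h : ∀ i j k l, P i j * Q k l = -(Q k l * P i j)) : (P * Q)ᵀ = -(Qᵀ * Pᵀ) := by
  ext i j
  rw [transpose_apply, neg_apply, mul_apply, mul_apply, ← Finset.sum_neg_distrib]
  exact Finset.sum_congr rfl fun k _ => h j k k i

theorem trace_mul_of_anticommute [Fintype n] {P : Matrix m n E} {Q : Matrix n m E}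
    (h : ∀ i j k l, P i j * Q k l = -(Q k l * P i j)) : (P * Q).trace = -(Q * P).trace := by
  simp only [trace, diag_apply, mul_apply, h, Finset.sum_neg_distrib]
  rw [Finset.sum_comm]

variable [DecidableEq m] [IsAddTorsionFree E] {X Y : Matrix m m E}

theorem trace_pow_eq_zero_of_anticommute (hX : Xᵀ = -X) (hY : Yᵀ = Y)
    (hXY : ∀ i j k l, X i j * Y k l = -(Y k l * X i j))
    {M : Matrix m m (Subring.center E)} (hM : M.map (Subring.center E).subtype = X * Y) (k : ℕ) :
    (M ^ (k + 1)).trace = 0 := by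
  let ι := (Subring.center E).subtype
  have map_pow_eq (N : Matrix m m (Subring.center E)) (k : ℕ) : (N ^ k).map ι = N.map ι ^ k :=
    map_pow ι.mapMatrix N k
  have map_transpose : Mᵀ.map ι = Y * X := by
    rw [transpose_map, hM, transpose_mul_of_anticommute hXY, hX, hY, mul_neg, neg_neg]
  have anticommute (i j k' l) :
      X i j * (Y * (X * Y) ^ k) k' l = -((Y * (X * Y) ^ k) k' l * X i j) := by
    rw [← hM, ← map_pow_eq]
    simp only [mul_apply, Finset.mul_sum, Finset.sum_mul, ← Finset.sum_neg_distrib]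
    refine Finset.sum_congr rfl fun q _ => ?_
    have central : X i j * ι ((M ^ k) q l) = ι ((M ^ k) q l) * X i j :=
      Subring.mem_center_iff.mp ((M ^ k) q l).2 _
    rw [map_apply, ← mul_assoc, hXY, neg_mul, mul_assoc, central, mul_assoc]
  have mul_pow_comm : Y * (X * Y) ^ k = (Y * X) ^ k * Y :=
    SemiconjBy.pow_right (mul_assoc Y X Y).symm k
  refine Subtype.val_injective (self_eq_neg.mp ?_)
  calc ι (M ^ (k + 1)).trace
    _ = (X * (Y * (X * Y) ^ k)).trace := by
      rw [AddMonoidHom.map_trace, map_pow_eq, hM, pow_succ', mul_assoc]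
    _ = -((Y * X) ^ (k + 1)).trace := by
      rw [trace_mul_of_anticommute anticommute, mul_pow_comm, mul_assoc, ← pow_succ]
    _ = -ι (M ^ (k + 1)).trace := by
      rw [← map_transpose, ← map_pow_eq, ← transpose_pow, ← AddMonoidHom.map_trace,
        trace_transpose]

theorem mul_pow_card_eq_zero_of_anticommute (hX : Xᵀ = -X) (hY : Yᵀ = Y)
    (hXY : ∀ i j k l, X i j * Y k l = -(Y k l * X i j))
    (hcentral : ∀ i j, (X * Y) i j ∈ Subring.center E) : (X * Y) ^ Fintype.card m = 0 := by
  let M : Matrix m m (Subring.center E) := .of fun i j => ⟨(X * Y) i j, hcentral i j⟩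
  have hM : M.map (Subring.center E).subtype = X * Y := rfl
  have : IsAddTorsionFree (Subring.center E) :=
    Function.Injective.isAddTorsionFree (Subring.center E).subtype.toAddMonoidHom
      Subtype.val_injective
  rw [← hM, ← RingHom.mapMatrix_apply, ← map_pow, pow_card_eq_zero_of_trace_pow_eq_zero
    (trace_pow_eq_zero_of_anticommute hX hY hXY hM), map_zero]

end Anticommuting

section ExteriorAlgebra

open ExteriorAlgebra

variable {R V : Type*} [CommRing R] [AddCommGroup V] [Module R V]

theorem ι_mul_ι_eq_neg (v w : V) : ι R v * ι R w = -(ι R w * ι R v) :=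
  eq_neg_of_add_eq_zero_left (ι_add_mul_swap v w)

theorem ι_mul_ι_mem_center (v w : V) :
    ι R v * ι R w ∈ Subring.center (ExteriorAlgebra R V) := by
  rw [Subring.mem_center_iff]
  intro a
  induction a using ExteriorAlgebra.induction with
  | algebraMap r => exact Algebra.commutes _ _
  | ι u => rw [← mul_assoc, ι_mul_ι_eq_neg u v, neg_mul, mul_assoc, ι_mul_ι_eq_neg u w, mul_neg,
      neg_neg, mul_assoc]
  | mul a b ha hb => rw [mul_assoc, hb, ← mul_assoc, ha, mul_assoc]
  | add a b ha hb => rw [add_mul, mul_add, ha, hb]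

theorem isAddTorsionFree_exteriorAlgebra [IsAddTorsionFree R] {I : Type*} (b : Module.Basis I R V) :
    IsAddTorsionFree (ExteriorAlgebra R V) := by
  classical
  let : LinearOrder I := linearOrderOfSTO WellOrderingRel
  exact Function.Injective.isAddTorsionFree b.ExteriorAlgebra.repr.toLinearMap.toAddMonoidHom
    b.ExteriorAlgebra.repr.injective

theorem map_ι_mul_map_ι_pow_card_eq_zero [IsAddTorsionFree R] [Module.Free R V]
    {m : Type*} [Fintype m] [DecidableEq m] {x y : Matrix m m V} (hx : xᵀ = -x) (hy : yᵀ = y) :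
    (x.map (ι R) * y.map (ι R)) ^ Fintype.card m = 0 := by
  have := isAddTorsionFree_exteriorAlgebra (Module.Free.chooseBasis R V)
  refine mul_pow_card_eq_zero_of_anticommute ?_ ?_ (fun _ _ _ _ => ι_mul_ι_eq_neg _ _)
    fun i j => Subring.sum_mem _ fun k _ => ι_mul_ι_mem_center _ _
  · rw [← transpose_map, hx]
    ext1 i j
    exact map_neg (ι R) (x i j)
  · rw [← transpose_map, hy]

end ExteriorAlgebra

section VectorCombination

variable {κ κ' m R V : Type*} [Fintype κ] [Fintype κ'] [CommRing R]
  [AddCommGroup V] [Module R V]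

/-- The linear combination `∑ i, v i • A i` of scalar matrices with vectors as coefficients, a
matrix with entries in `V`. -/
def vectorCombination (v : κ → V) (A : κ → Matrix m m R) : Matrix m m V :=
  ∑ i, (A i).map (· • v i)

theorem transpose_vectorCombination (v : κ → V) (A : κ → Matrix m m R) :
    (vectorCombination v A)ᵀ = vectorCombination v fun i => (A i)ᵀ :=
  transpose_sum _ _

theorem vectorCombination_neg (v : κ → V) (A : κ → Matrix m m R) :
    (vectorCombination v fun i => -A i) = -vectorCombination v A := by
  ext p q
  simp [vectorCombination, Matrix.sum_apply]

theorem map_vectorCombination {W : Type*} [AddCommGroup W] [Module R W] (f : V →ₗ[R] W)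
    (v : κ → V) (A : κ → Matrix m m R) :
    (vectorCombination v A).map f = vectorCombination (f ∘ v) A := by
  ext p q
  simp [vectorCombination, Matrix.sum_apply]

theorem vectorCombination_eq_sum_smul (c : κ → R) (A : κ → Matrix m m R) :
    vectorCombination c A = ∑ i, c i • A i := by
  refine Finset.sum_congr rfl fun i _ => ?_
  ext p q
  exact mul_comm _ _

variable [Fintype m] {E : Type*} [Ring E] [Algebra R E]

theorem map_smul_mul_map_smul (M N : Matrix m m R) (a b : E) :
    M.map (· • a) * N.map (· • b) = (M * N).map (· • (a * b)) := by
  ext p q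
  simp only [mul_apply, map_apply, smul_mul_smul_comm, Finset.sum_smul]

theorem vectorCombination_mul (v : κ → E) (w : κ' → E) (A : κ → Matrix m m R)
    (B : κ' → Matrix m m R) :
    vectorCombination v A * vectorCombination w B =
      vectorCombination (fun h : κ × κ' => v h.1 * w h.2) fun h => A h.1 * B h.2 := by
  simp only [vectorCombination, Finset.sum_mul_sum, map_smul_mul_map_smul, Fintype.sum_prod_type]

variable [DecidableEq m]

theorem prod_ofFn_map_smul {n : ℕ} (c : Fin n → E) (N : Fin n → Matrix m m R) :
    (List.ofFn fun t => (N t).map (· • c t)).prod =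
      (List.ofFn N).prod.map (· • (List.ofFn c).prod) := by
  induction n with
  | zero =>
    ext p q
    by_cases h : p = q <;> simp [h]
  | succ n ih => simp only [List.ofFn_succ, List.prod_cons, ih, map_smul_mul_map_smul]

theorem vectorCombination_pow (c : κ → E) (N : κ → Matrix m m R) (n : ℕ) :
    vectorCombination c N ^ n =
      vectorCombination (fun r : Fin n → κ => (List.ofFn fun t => c (r t)).prod)
        fun r => (List.ofFn fun t => N (r t)).prod := by
  classical
  have h := (MultilinearMap.mkPiAlgebraFin ℤ n (Matrix m m E)).map_sum
    fun _ i => (N i).map (· • c i)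
  simpa only [vectorCombination, MultilinearMap.mkPiAlgebraFin_apply, List.ofFn_const,
    List.prod_replicate, prod_ofFn_map_smul] using h

end VectorCombination

section VolumeCoefficient

open ExteriorAlgebra

variable {R : Type*} [CommRing R] {n : ℕ}

/-- The coefficient of the volume form `e (0, 0) ∧ e (0, 1) ∧ e (1, 0) ∧ e (1, 1) ∧ ⋯`, as a linear
functional on the exterior algebra of the free module with basis `e` indexed by `Fin n × Fin 2`. -/
noncomputable def volumeCoeff (R : Type*) [CommRing R] (n : ℕ) :
    ExteriorAlgebra R (Fin n × Fin 2 → R) →ₗ[R] R :=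
  liftAlternating (Pi.single (n * 2) (detRowAlternating.domDomCongr finProdFinEquiv))

theorem prod_ofFn_ι_mul_ι {V : Type*} [AddCommGroup V] [Module R V] (u : Fin n × Fin 2 → V) :
    (List.ofFn fun t => ι R (u (t, 0)) * ι R (u (t, 1))).prod =
      ιMulti R (n * 2) (u ∘ finProdFinEquiv.symm) := by
  have u_symm (t : Fin n) (j : Fin 2) (h) :
      u (finProdFinEquiv.symm (⟨t * 2 + j, h⟩ : Fin (n * 2))) = u (t, j) := by
    congr 1
    rw [Equiv.symm_apply_eq]
    ext
    simp [finProdFinEquiv, mul_comm, add_comm]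
  rw [ιMulti_apply, List.ofFn_mul, List.prod_flatten, List.map_ofFn]
  congr 2
  funext t
  simp only [Function.comp_apply, List.ofFn_succ, List.ofFn_zero, List.prod_cons, List.prod_nil,
    mul_one, Fin.succ_zero_eq_one, u_symm]

theorem volumeCoeff_prod_ofFn_ι_mul_ι (M : Matrix (Fin n × Fin 2) (Fin n × Fin 2) R) :
    volumeCoeff R n (List.ofFn fun t => ι R (M.row (t, 0)) * ι R (M.row (t, 1))).prod = M.det := by
  rw [prod_ofFn_ι_mul_ι, volumeCoeff, liftAlternating_apply_ιMulti, Pi.single_eq_same,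
    AlternatingMap.domDomCongr_apply]
  congr 1
  ext1 i
  exact congrArg M (finProdFinEquiv.symm_apply_apply i)

theorem row_blockDiagonal_one_submatrix {l m o : Type*} [DecidableEq m] [DecidableEq o]
    (f : o → l → m) (t : l) (k : o) :
    (blockDiagonal fun k => (1 : Matrix m m R).submatrix (f k) id).row (t, k) =
      Pi.single (f k t, k) 1 := by
  ext ⟨i, j⟩
  simp only [row_apply, blockDiagonal_apply, submatrix_apply, id_eq, Matrix.one_apply,
    Pi.single_apply, Prod.mk.injEq]
  grind

theorem volumeCoeff_prod_ofFn_single (f g : Fin n → Fin n) :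
    volumeCoeff R n (List.ofFn fun t =>
        ι R (Pi.single (f t, 0) 1) * ι R (Pi.single (g t, 1) 1)).prod =
      ((1 : Matrix (Fin n) (Fin n) R).submatrix f id).det *
        ((1 : Matrix (Fin n) (Fin n) R).submatrix g id).det := by
  have h := volumeCoeff_prod_ofFn_ι_mul_ι
    (blockDiagonal fun k => (1 : Matrix (Fin n) (Fin n) R).submatrix (![f, g] k) id)
  simpa only [row_blockDiagonal_one_submatrix, det_blockDiagonal, Fin.prod_univ_two,
    cons_val_zero, cons_val_one] using h

end VolumeCoefficient

section DetRows

theorem det_one_submatrix_of_not_injective {m R : Type*} [Fintype m] [DecidableEq m] [CommRing R]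
    {f : m → m} (hf : ¬Function.Injective f) : ((1 : Matrix m m R).submatrix f id).det = 0 := by
  obtain ⟨i, j, hij, hne⟩ := Function.not_injective_iff.mp hf
  exact det_zero_of_row_eq hne (congrArg (1 : Matrix m m R) hij)

theorem sum_det_one_submatrix_smul {m R W : Type*} [Fintype m] [DecidableEq m] [CommRing R]
    [AddCommGroup W] [Module R W] (F : (m → m) → W) :
    ∑ f : m → m, ((1 : Matrix m m R).submatrix f id).det • F f =
      ∑ σ : Equiv.Perm m, (Equiv.Perm.sign σ : ℤ) • F σ := by
  refine (Fintype.sum_of_injective _ DFunLike.coe_injective _ _ (fun f hf => ?_) fun σ => ?_).symm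
  · have not_injective : ¬Function.Injective f := fun h =>
      hf ⟨.ofBijective f (Finite.injective_iff_bijective.mp h), rfl⟩
    rw [det_one_submatrix_of_not_injective not_injective, zero_smul]
  · rw [det_permute, det_one, mul_one, Int.cast_smul_eq_zsmul]

end DetRows

section DoubleAlternatingSum

open ExteriorAlgebra

variable {R m : Type*} [CommRing R] [Fintype m] [DecidableEq m] {n : ℕ}

/-- The matrix `∑ i, e (i, a) • A i` over the exterior algebra of the free module with basis `e`
indexed by `Fin n × Fin 2`; the generators with `a = 0` and `a = 1` serve as coefficients of two
independent families of matrices. -/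
noncomputable def exteriorCombination (a : Fin 2) (A : Fin n → Matrix m m R) :
    Matrix m m (ExteriorAlgebra R (Fin n × Fin 2 → R)) :=
  (vectorCombination (fun i => Pi.single (i, a) 1) A).map (ι R)

theorem exteriorCombination_mul_pow_card_eq_zero [IsAddTorsionFree R] {A B : Fin n → Matrix m m R}
    (hA : ∀ i, (A i)ᵀ = -A i) (hB : ∀ j, (B j)ᵀ = B j) :
    (exteriorCombination 0 A * exteriorCombination 1 B) ^ Fintype.card m = 0 := by
  apply map_ι_mul_map_ι_pow_card_eq_zero
  · simp only [transpose_vectorCombination, hA, vectorCombination_neg]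
  · simp only [transpose_vectorCombination, hB]

theorem map_volumeCoeff_exteriorCombination_mul_pow (A B : Fin n → Matrix m m R) :
    ((exteriorCombination 0 A * exteriorCombination 1 B) ^ n).map (volumeCoeff R n) =
      ∑ r : Fin n → Fin n × Fin n,
        (((1 : Matrix (Fin n) (Fin n) R).submatrix (fun t => (r t).1) id).det *
          ((1 : Matrix (Fin n) (Fin n) R).submatrix (fun t => (r t).2) id).det) •
          (List.ofFn fun t => A (r t).1 * B (r t).2).prod := by
  simp only [exteriorCombination, map_vectorCombination, vectorCombination_mul,
    vectorCombination_pow, vectorCombination_eq_sum_smul, Function.comp_apply,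
    volumeCoeff_prod_ofFn_single]

theorem sum_sign_smul_prod_eq_map_volumeCoeff (A B : Fin n → Matrix m m R) :
    ∑ σ : Equiv.Perm (Fin n), ∑ τ : Equiv.Perm (Fin n),
      ((Equiv.Perm.sign σ * Equiv.Perm.sign τ : ℤˣ) : ℤ) •
        (List.ofFn fun t : Fin n => A (σ t) * B (τ t)).prod =
      ((exteriorCombination 0 A * exteriorCombination 1 B) ^ n).map (volumeCoeff R n) := by
  let δ (f : Fin n → Fin n) : R := ((1 : Matrix (Fin n) (Fin n) R).submatrix f id).det
  let P (f g : Fin n → Fin n) : Matrix m m R := (List.ofFn fun t => A (f t) * B (g t)).prod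
  calc ∑ σ : Equiv.Perm (Fin n), ∑ τ : Equiv.Perm (Fin n),
        ((Equiv.Perm.sign σ * Equiv.Perm.sign τ : ℤˣ) : ℤ) • P σ τ
    _ = ∑ σ : Equiv.Perm (Fin n), (Equiv.Perm.sign σ : ℤ) •
          ∑ τ : Equiv.Perm (Fin n), (Equiv.Perm.sign τ : ℤ) • P σ τ := by
      simp only [Units.val_mul, mul_smul, Finset.smul_sum]
    _ = ∑ f, δ f • ∑ g, δ g • P f g := by
      simp only [δ, sum_det_one_submatrix_smul (P _),
        sum_det_one_submatrix_smul fun f => ∑ τ : Equiv.Perm (Fin n), _ • P f τ]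
    _ = ∑ r : Fin n → Fin n × Fin n,
          (δ (Prod.fst ∘ r) * δ (Prod.snd ∘ r)) • P (Prod.fst ∘ r) (Prod.snd ∘ r) := by
      simp only [Finset.smul_sum, smul_smul, ← Fintype.sum_prod_type']
      exact ((Equiv.arrowProdEquivProdArrow (Fin n) _ _).sum_comp
        fun h => (δ h.1 * δ h.2) • P h.1 h.2).symm
    _ = _ := (map_volumeCoeff_exteriorCombination_mul_pow A B).symm

theorem giambruno_general [IsAddTorsionFree R] (hn : Fintype.card m ≤ n)
    (A : Fin n → Matrix m m R) (hA : ∀ i, (A i)ᵀ = -A i)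
    (B : Fin n → Matrix m m R) (hB : ∀ j, (B j)ᵀ = B j) :
    ∑ σ : Equiv.Perm (Fin n), ∑ τ : Equiv.Perm (Fin n),
      ((Equiv.Perm.sign σ * Equiv.Perm.sign τ : ℤˣ) : ℤ) •
        (List.ofFn fun t : Fin n => A (σ t) * B (τ t)).prod
    = 0 := by
  have pow_eq_zero : (exteriorCombination 0 A * exteriorCombination 1 B) ^ n = 0 :=
    pow_eq_zero_of_le hn (exteriorCombination_mul_pow_card_eq_zero hA hB)
  rw [sum_sign_smul_prod_eq_map_volumeCoeff, pow_eq_zero, Matrix.map_zero _ (map_zero _)]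

end DoubleAlternatingSum

theorem giambruno (n : ℕ) (hn : 0 < n)
    (A : Fin n → Matrix (Fin n) (Fin n) ℂ) (hA : ∀ i, (A i)ᵀ = -A i)
    (B : Fin n → Matrix (Fin n) (Fin n) ℂ) (hB : ∀ j, (B j)ᵀ = B j) :
    ∑ σ : Equiv.Perm (Fin n), ∑ τ : Equiv.Perm (Fin n),
      ((Equiv.Perm.sign σ * Equiv.Perm.sign τ : ℤˣ) : ℤ) •
        (List.ofFn fun t : Fin n => A (σ t) * B (τ t)).prod
    = 0 :=
  giambruno_general (Fintype.card_fin n).le A hA B hB
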